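/- Suppose g : ℕ × ℕ → ℚ satisfies g(m,0) = 1 for all m ≥ 1, g(0,j) = 0 for all j ≥ 1, and the recurrence g(m,j) = g(m-1,j) + g(m+1,j-1) for all m ≥ 1 and j ≥ 1. Then for all m ≥ 1 and j ≥ 0, g(m,j) = (m/(2j+m))·C(2j+m, j). -/

import Mathlib

/-!
The recurrence determines column `j + 1` from column `j` and the value at `m = 0`, so it is enough
that the ballot numbers satisfy it. The two ballot numbers on its right-hand side are both multiples
of binomial coefficients in row `N = 2j + m + 2`, and so, after Pascal's rule, is the one on the
left; what remains is twice the identity `(j + 1) C(N, j + 1) = (N - j) C(N, j)`.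
-/

/-- The recurrence for the number of ball paths in a truncated Pachinko, with both indices shifted
by one so that no truncated subtraction occurs. -/
def SatisfiesBallotRecurrence {α : Type*} [Add α] (f : ℕ → ℕ → α) : Prop :=
  ∀ m j, f (m + 1) (j + 1) = f m (j + 1) + f (m + 2) j

theorem SatisfiesBallotRecurrence.eq_of_eq_on_boundary {α : Type*} [Add α] {f g : ℕ → ℕ → α}
    (hf : SatisfiesBallotRecurrence f) (hg : SatisfiesBallotRecurrence g)
    (h_right : ∀ m, f (m + 1) 0 = g (m + 1) 0) (h_left : ∀ j, f 0 (j + 1) = g 0 (j + 1))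
    (m j : ℕ) : f (m + 1) j = g (m + 1) j := by
  induction j generalizing m with
  | zero => exact h_right m
  | succ j ih_col =>
    induction m with
    | zero => rw [hf, hg, h_left, ih_col]
    | succ m ih_row => rw [hf, hg, ih_row, ih_col]

section BallotNumber

variable (K : Type*) [Field K]

/-- The ballot number `B(m, j)`, as an element of a field. The entry `B(0, 0)` has the junk value
`0`, since division by zero gives zero. -/
def ballotNumber (m j : ℕ) : K :=
  (m : K) / (2 * j + m) * (2 * j + m).choose j

theorem ballotNumber_zero_left (j : ℕ) : ballotNumber K 0 j = 0 := by
  simp [ballotNumber]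

variable [CharZero K]

theorem ballotNumber_succ_zero (m : ℕ) : ballotNumber K (m + 1) 0 = 1 := by
  have hm : (m : K) + 1 ≠ 0 := m.cast_add_one_ne_zero
  simp [ballotNumber, hm]

theorem satisfiesBallotRecurrence_ballotNumber :
    SatisfiesBallotRecurrence (ballotNumber K) := by
  intro m j
  have pascal : (2 * (j + 1) + (m + 1)).choose (j + 1) =
      (2 * j + m + 2).choose j + (2 * j + m + 2).choose (j + 1) := by
    rw [← Nat.choose_succ_succ']
    congr 1
    ring
  have ratio : ((2 * j + m + 2).choose (j + 1) : K) * (j + 1) =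
      (2 * j + m + 2).choose j * (j + m + 2) := by
    have h := Nat.choose_succ_right_eq (2 * j + m + 2) j
    rw [show 2 * j + m + 2 - j = j + m + 2 by lia] at h
    exact_mod_cast h
  have row_ne_zero : (2 * j + m + 2 : K) ≠ 0 := by exact_mod_cast (2 * j + m + 1).succ_ne_zero
  have next_row_ne_zero : (2 * j + m + 3 : K) ≠ 0 := by
    exact_mod_cast (2 * j + m + 2).succ_ne_zero
  simp only [ballotNumber, pascal, show 2 * (j + 1) + m = 2 * j + m + 2 by ring,
    show 2 * j + (m + 2) = 2 * j + m + 2 by ring]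
  push_cast
  rw [show (2 * (j + 1) + (m + 1) : K) = 2 * j + m + 3 by ring,
    show (2 * (j + 1) + m : K) = 2 * j + m + 2 by ring,
    show (2 * j + (m + 2) : K) = 2 * j + m + 2 by ring]
  field_simp
  linear_combination 2 * ratio

end BallotNumber

theorem ballot_recurrence_unique_general {K : Type*} [Field K] [CharZero K] (g : ℕ × ℕ → K)
    (h0 : ∀ m : ℕ, 1 ≤ m → g (m, 0) = 1)
    (h1 : ∀ j : ℕ, 1 ≤ j → g (0, j) = 0)
    (hrec : ∀ m j : ℕ, 1 ≤ m → 1 ≤ j → g (m, j) = g (m - 1, j) + g (m + 1, j - 1)) :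
    ∀ m j : ℕ, 1 ≤ m →
      g (m, j) = ((m : K) / (2 * j + m)) * (Nat.choose (2 * j + m) j) := by
  intro m j hm
  obtain ⟨m, rfl⟩ := Nat.exists_eq_add_of_le' hm
  have hg : SatisfiesBallotRecurrence (Function.curry g) :=
    fun m j ↦ hrec (m + 1) (j + 1) m.succ_pos j.succ_pos
  have g_right (m : ℕ) : g (m + 1, 0) = ballotNumber K (m + 1) 0 := by
    rw [h0 _ m.succ_pos, ballotNumber_succ_zero]
  have g_left (j : ℕ) : g (0, j + 1) = ballotNumber K 0 (j + 1) := by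
    rw [h1 _ j.succ_pos, ballotNumber_zero_left]
  exact hg.eq_of_eq_on_boundary (satisfiesBallotRecurrence_ballotNumber K) g_right g_left m j

theorem ballot_recurrence_unique (g : ℕ × ℕ → ℚ)
    (h0 : ∀ m : ℕ, 1 ≤ m → g (m, 0) = 1)
    (h1 : ∀ j : ℕ, 1 ≤ j → g (0, j) = 0)
    (hrec : ∀ m j : ℕ, 1 ≤ m → 1 ≤ j → g (m, j) = g (m - 1, j) + g (m + 1, j - 1)) :
    ∀ m j : ℕ, 1 ≤ m →
      g (m, j) = ((m : ℚ) / (2 * j + m)) * (Nat.choose (2 * j + m) j) :=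
  ballot_recurrence_unique_general g h0 h1 hrec
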